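/- The shadow projection is 1-Lipschitz for the Wasserstein-1 distance in its first argument: if η, η' are measures of equal mass with η ≤_{c,+} ν and η' ≤_{c,+} ν, and additionally η' ≤_c η approximation structure as in the source, then W(S^ν(η), S^ν(η')) ≤ W(η, η'). -/

import Mathlib

open MeasureTheory

/-- Convex order on finite measures: `∫ φ dμ ≤ ∫ φ dν` for every convex `φ` for which
both integrals exist. -/
def ConvexOrder (μ ν : Measure ℝ) : Prop :=
  ∀ φ : ℝ → ℝ, ConvexOn ℝ Set.univ φ → Integrable φ μ → Integrable φ ν →
    ∫ x, φ x ∂μ ≤ ∫ x, φ x ∂ν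

/-- `μ ≤_{c,+} ν`: there exists `η` with `μ ≤_c η` and `η ≤ ν` setwise. -/
def ConvexPlusOrder (μ ν : Measure ℝ) : Prop :=
  ∃ η : Measure ℝ, ConvexOrder μ η ∧ η ≤ ν

/-- `η` is the shadow of `μ` in `ν`: the `≤_c`-smallest measure `η` with `μ ≤_c η`
and `η ≤ ν`. -/
def IsShadow (μ ν η : Measure ℝ) : Prop :=
  ConvexOrder μ η ∧ η ≤ ν ∧
    ∀ η' : Measure ℝ, ConvexOrder μ η' → η' ≤ ν → ConvexOrder η η'

/-- Wasserstein-1 distance in its dual (Kantorovich–Rubinstein) formulation. -/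
noncomputable def W1 (μ ν : Measure ℝ) : ℝ :=
  ⨆ f : {f : ℝ → ℝ // LipschitzWith 1 f},
    |∫ x, (f : ℝ → ℝ) x ∂μ - ∫ x, (f : ℝ → ℝ) x ∂ν|

/-!
Let `P` denote the potential `k ↦ ∫ (k - x)⁺` of a measure. Convex order is the pointwise order of
potentials (among measures of equal mass and mean), and `κ ≤ ν` makes `P ν - P κ` convex; hence the
shadow `S` of `η` in `ν` is characterised by `P ν - P S` being the convex envelope of `P ν - P η`
(Beiglböck, Hobson, Norgilas). If `h - f` is nondecreasing, then so is the difference of the convex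
envelopes of `h` and `f`. Writing `P η - P η'` as a difference `a - b` of bounded nondecreasing
functions and comparing `P ν - P η` and `P ν - P η'` with the common function
`P ν - P η + a = P ν - P η' + b`, one finds that passing to the shadows does not increase the total
variation of the difference of the potentials. As the right derivative of the potential is the
distribution function, for equal masses that total variation is the L¹ distance of the distribution
functions, that is, the Wasserstein-1 distance.
-/

open Set Filter Topology
open scoped ENNReal Interval

section ConvexLine

lemma convexOn_iff_le_affine {s : Set ℝ} (hs : Convex ℝ s) {u : ℝ → ℝ} :
    ConvexOn ℝ s u ↔ ∀ p ∈ s, ∀ q ∈ s, ∀ r ∈ Icc p q, ∀ c m : ℝ,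
      u p ≤ c + m * p → u q ≤ c + m * q → u r ≤ c + m * r := by
  refine ⟨fun hu p hp q hq r hr c m hcp hcq => ?_, fun h => ?_⟩
  · have hlin : ConcaveOn ℝ s fun x => c + m * x :=
      (concaveOn_const c hs).add ((LinearMap.mulLeft ℝ m).concaveOn hs)
    have hmax := (hu.sub hlin).le_max_of_mem_Icc hp hq hr
    simp only [Pi.sub_apply] at hmax
    linarith [hmax.trans (max_le (sub_nonpos.2 hcp) (sub_nonpos.2 hcq))]
  · refine LinearOrder.convexOn_of_lt hs fun p hp q hq hpq a b ha hb hab => ?_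
    have hne : q - p ≠ 0 := (sub_pos.2 hpq).ne'
    obtain rfl : a = 1 - b := by linarith
    simp only [smul_eq_mul]
    have hr : (1 - b) * p + b * q ∈ Icc p q := ⟨by nlinarith, by nlinarith⟩
    refine (h p hp q hq _ hr (u p - (u q - u p) / (q - p) * p) ((u q - u p) / (q - p))
      (by linarith) (le_of_eq ?_)).trans_eq ?_ <;> field_simp <;> ring

end ConvexLine

section RightDerivative

/-- The right derivative of a function on the line; for convex functions it exists everywhere. -/
noncomputable def rightDeriv (φ : ℝ → ℝ) (x : ℝ) : ℝ :=
  derivWithin φ (Ioi x) x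

variable {φ : ℝ → ℝ}

lemma hasDerivWithinAt_rightDeriv (hφ : ConvexOn ℝ univ φ) (x : ℝ) :
    HasDerivWithinAt φ (rightDeriv φ x) (Ioi x) x :=
  hφ.hasDerivWithinAt_rightDeriv_of_mem_interior (by simp)

lemma monotone_rightDeriv (hφ : ConvexOn ℝ univ φ) : Monotone (rightDeriv φ) :=
  fun _ _ hxy => hφ.monotoneOn_rightDeriv (by simp) (by simp) hxy

lemma continuous_of_convexOn_univ (hφ : ConvexOn ℝ univ φ) : Continuous φ :=
  continuousOn_univ.mp (hφ.continuousOn isOpen_univ)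

lemma integral_rightDeriv (hφ : ConvexOn ℝ univ φ) (a b : ℝ) :
    ∫ t in a..b, rightDeriv φ t = φ b - φ a :=
  intervalIntegral.integral_eq_sub_of_hasDeriv_right
    (continuous_of_convexOn_univ hφ).continuousOn (fun x _ => hasDerivWithinAt_rightDeriv hφ x)
    (monotone_rightDeriv hφ).intervalIntegrable

lemma rightDeriv_le_slope (hφ : ConvexOn ℝ univ φ) {x y : ℝ} (hxy : x < y) :
    rightDeriv φ x ≤ slope φ x y :=
  hφ.rightDeriv_le_slope_of_mem_interior (by simp) (by simp) hxy

lemma continuousWithinAt_rightDeriv (hφ : ConvexOn ℝ univ φ) (x : ℝ) :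
    ContinuousWithinAt (rightDeriv φ) (Ici x) x := by
  refine tendsto_order.2 ⟨fun c hc => ?_, fun c hc => ?_⟩
  · filter_upwards [self_mem_nhdsWithin] with z hz
    exact hc.trans_le (monotone_rightDeriv hφ hz)
  -- A secant slope from `x` below `c` stays below `c` when its left end moves to a nearby `z`,
  -- where it still dominates the right derivative.
  · have hslope : ∀ᶠ y in 𝓝[>] x, slope φ x y < c :=
      ((hasDerivWithinAt_iff_tendsto_slope' self_notMem_Ioi).mp
        (hasDerivWithinAt_rightDeriv hφ x)).eventually (gt_mem_nhds hc)
    obtain ⟨y, hyc, hxy : x < y⟩ := (hslope.and self_mem_nhdsWithin).exists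
    have hcont : ContinuousAt (fun z => slope φ z y) x := by
      have := continuous_of_convexOn_univ hφ
      simp only [slope_def_field]
      exact ContinuousAt.div (by fun_prop) (by fun_prop) (sub_pos.2 hxy).ne'
    filter_upwards [nhdsWithin_le_nhds (hcont.eventually (gt_mem_nhds hyc)),
      nhdsWithin_le_nhds (gt_mem_nhds hxy)] with z hzc hzy
    exact (rightDeriv_le_slope hφ hzy).trans_lt hzc

/-- The right derivative of a convex function as a Stieltjes function; its measure is the second
derivative of the convex function in the sense of distributions. -/
noncomputable def rightDerivStieltjes (hφ : ConvexOn ℝ univ φ) : StieltjesFunction ℝ where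
  toFun := rightDeriv φ
  mono' := monotone_rightDeriv hφ
  right_continuous' := continuousWithinAt_rightDeriv hφ

lemma rightDeriv_nonneg_of_tendsto_atBot (hφ : ConvexOn ℝ univ φ) {l : ℝ}
    (hl : Tendsto φ atBot (𝓝 l)) (x : ℝ) : 0 ≤ rightDeriv φ x := by
  have hslope : Tendsto (fun y => slope φ y x) atBot (𝓝 0) := by
    simp only [slope_def_field]
    exact (hl.const_sub (φ x)).div_atTop (tendsto_atTop_add_const_left _ x tendsto_neg_atBot_atTop)
  refine le_of_tendsto hslope ?_
  filter_upwards [eventually_lt_atBot x] with y hy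
  exact (hφ.slope_le_leftDeriv_of_mem_interior (by simp) (by simp) hy).trans
    (hφ.leftDeriv_le_rightDeriv_of_mem_interior (by simp))

lemma tendsto_rightDeriv_atBot (hφ : ConvexOn ℝ univ φ) {l : ℝ} (hl : Tendsto φ atBot (𝓝 l)) :
    Tendsto (rightDeriv φ) atBot (𝓝 0) := by
  have hstep : Tendsto (fun x => φ (x + 1) - φ x) atBot (𝓝 0) := by
    simpa using (hl.comp (tendsto_atBot_add_const_right _ 1 tendsto_id)).sub hl
  refine squeeze_zero (rightDeriv_nonneg_of_tendsto_atBot hφ hl) (fun x => ?_) hstep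
  simpa [slope_def_field] using rightDeriv_le_slope hφ (lt_add_one x)

end RightDerivative

section ConvexEnvelope

/-- The convex functions lying below `f`. -/
def convexMinorants {E : Type*} [AddCommGroup E] [Module ℝ E] (f : E → ℝ) : Set (E → ℝ) :=
  {ψ | ConvexOn ℝ univ ψ ∧ ψ ≤ f}

/-- The convex envelope of `f`, its largest convex minorant. The supremum is only meaningful when
`f` has a convex minorant. -/
noncomputable def convexEnvelope {E : Type*} [AddCommGroup E] [Module ℝ E] (f : E → ℝ) (x : E) :
    ℝ :=
  ⨆ ψ : convexMinorants f, ψ.1 x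

section Module

variable {E : Type*} [AddCommGroup E] [Module ℝ E] {f h ψ : E → ℝ}

lemma convexMinorants_mono (hfh : f ≤ h) : convexMinorants f ⊆ convexMinorants h :=
  fun _ hψ => ⟨hψ.1, hψ.2.trans hfh⟩

lemma le_convexEnvelope (hψ : ψ ∈ convexMinorants f) : ψ ≤ convexEnvelope f := fun x =>
  le_ciSup (f := fun ψ : convexMinorants f => ψ.1 x)
    ⟨f x, by rintro _ ⟨φ, rfl⟩; exact φ.2.2 x⟩ ⟨ψ, hψ⟩

lemma convexEnvelope_le (hf : (convexMinorants f).Nonempty) : convexEnvelope f ≤ f := fun x =>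
  have := hf.to_subtype
  ciSup_le fun ψ => ψ.2.2 x

lemma convexOn_convexEnvelope (hf : (convexMinorants f).Nonempty) :
    ConvexOn ℝ univ (convexEnvelope f) := by
  have := hf.to_subtype
  refine ⟨convex_univ, fun x hx y hy a b ha hb hab => ciSup_le fun ψ => ?_⟩
  calc ψ.1 (a • x + b • y) ≤ a • ψ.1 x + b • ψ.1 y := ψ.2.1.2 hx hy ha hb hab
    _ ≤ a • convexEnvelope f x + b • convexEnvelope f y := by
      gcongr <;> exact le_convexEnvelope ψ.2 _

lemma convexEnvelope_mono (hf : (convexMinorants f).Nonempty) (hfh : f ≤ h) :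
    convexEnvelope f ≤ convexEnvelope h :=
  le_convexEnvelope ⟨convexOn_convexEnvelope hf, (convexEnvelope_le hf).trans hfh⟩

lemma convexEnvelope_le_add_const (hh : (convexMinorants h).Nonempty) {C : ℝ}
    (hhf : ∀ x, h x ≤ f x + C) (x : E) : convexEnvelope h x ≤ convexEnvelope f x + C :=
  sub_le_iff_le_add.1 <| le_convexEnvelope (ψ := fun x => convexEnvelope h x - C)
    ⟨(convexOn_convexEnvelope hh).sub (concaveOn_const C convex_univ), fun y =>
      sub_le_iff_le_add.2 ((convexEnvelope_le hh y).trans (hhf y))⟩ x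

end Module

lemma inter_frontier_nonempty_of_isPreconnected {X : Type*} [TopologicalSpace X] {t s : Set X}
    (ht : IsPreconnected t) (hts : (t ∩ s).Nonempty) (hts' : (t ∩ sᶜ).Nonempty) :
    (t ∩ frontier s).Nonempty := by
  by_contra! hempty
  have hcover : t ⊆ interior s ∪ interior sᶜ := fun x hx => by
    have hxs : x ∉ frontier s := fun hxs => (hempty ▸ ⟨hx, hxs⟩ : x ∈ (∅ : Set X))
    rw [interior_compl]
    by_contra hx'
    simp only [mem_union, mem_compl_iff, not_or, not_not] at hx'
    exact hxs ⟨hx'.2, hx'.1⟩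
  have hdisj : Disjoint (interior s) (interior sᶜ) :=
    disjoint_compl_right.mono interior_subset interior_subset
  rcases ht.subset_or_subset isOpen_interior isOpen_interior hdisj hcover with hs | hs
  · obtain ⟨x, hxt, hxs⟩ := hts'
    exact hxs (interior_subset (hs hxt))
  · obtain ⟨x, hxt, hxs⟩ := hts
    exact interior_subset (hs hxt) hxs

lemma convexOn_piecewise_sup {s : Set ℝ} [DecidablePred (· ∈ s)] (hs : IsClosed s) {v k : ℝ → ℝ}
    (hv : ConvexOn ℝ univ v) (hk : ConvexOn ℝ s k) (hkv : ∀ x ∈ frontier s, k x ≤ v x) :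
    ConvexOn ℝ univ (s.piecewise (v ⊔ k) v) := by
  have hle : v ≤ s.piecewise (v ⊔ k) v := fun x => by
    by_cases hx : x ∈ s <;> simp [hx]
  refine (convexOn_iff_le_affine convex_univ).2 fun p _ q _ r hr c m hp hq => ?_
  have hv_le : ∀ x ∈ Icc p q, v x ≤ c + m * x := fun x hx =>
    (convexOn_iff_le_affine convex_univ).1 hv p trivial q trivial x hx c m
      ((hle p).trans hp) ((hle q).trans hq)
  by_cases hrs : r ∈ s
  · simp only [piecewise_eq_of_mem _ _ _ hrs, Pi.sup_apply, sup_le_iff]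
    refine ⟨hv_le r hr, ?_⟩
    -- An end of `[p, q]` outside `s` is replaced by a frontier point of `s`.
    have hend : ∀ e ∈ Icc p q, s.piecewise (v ⊔ k) v e ≤ c + m * e →
        ∃ e' ∈ uIcc e r, e' ∈ s ∧ k e' ≤ c + m * e' := by
      intro e he hce
      by_cases hes : e ∈ s
      · refine ⟨e, left_mem_uIcc, hes, le_trans ?_ hce⟩
        simp [hes]
      · obtain ⟨e', hee', hfr⟩ := inter_frontier_nonempty_of_isPreconnected
          (isPreconnected_uIcc (a := e) (b := r)) ⟨r, right_mem_uIcc, hrs⟩ ⟨e, left_mem_uIcc, hes⟩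
        exact ⟨e', hee', hs.frontier_subset hfr,
          (hkv e' hfr).trans (hv_le e' (uIcc_subset_Icc he hr hee'))⟩
    obtain ⟨p', hp', hp's, hkp'⟩ := hend p (left_mem_Icc.2 (hr.1.trans hr.2)) hp
    obtain ⟨q', hq', hq's, hkq'⟩ := hend q (right_mem_Icc.2 (hr.1.trans hr.2)) hq
    rw [uIcc_of_le hr.1] at hp'
    rw [uIcc_of_ge hr.2] at hq'
    exact (convexOn_iff_le_affine hk.1).1 hk p' hp's q' hq's r ⟨hp'.2, hq'.1⟩ c m hkp' hkq'
  · simpa [hrs] using hv_le r hr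

lemma le_convexEnvelope_of_frontier {s : Set ℝ} (hs : IsClosed s) {f k : ℝ → ℝ}
    (hf : (convexMinorants f).Nonempty) (hk : ConvexOn ℝ s k)
    (hInt : ∀ x ∈ interior s, k x ≤ f x) (hfr : ∀ x ∈ frontier s, k x ≤ convexEnvelope f x)
    {x : ℝ} (hx : x ∈ s) : k x ≤ convexEnvelope f x := by
  classical
  have hkf : ∀ y ∈ s, k y ≤ f y := fun y hy => by
    by_cases hy' : y ∈ interior s
    · exact hInt y hy'
    · exact (hfr y ⟨subset_closure hy, hy'⟩).trans (convexEnvelope_le hf y)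
  have hglue : s.piecewise (convexEnvelope f ⊔ k) (convexEnvelope f) ∈ convexMinorants f := by
    refine ⟨convexOn_piecewise_sup hs (convexOn_convexEnvelope hf) hk hfr, fun y => ?_⟩
    by_cases hy : y ∈ s
    · simpa [hy] using ⟨convexEnvelope_le hf y, hkf y hy⟩
    · simpa [hy] using convexEnvelope_le hf y
  have := le_convexEnvelope hglue x
  simp only [piecewise_eq_of_mem _ _ _ hx, Pi.sup_apply] at this
  exact le_sup_right.trans this

lemma convexOn_sub_convexEnvelope_sub {G p : ℝ → ℝ} (hG : ConvexOn ℝ univ G)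
    (hp : ConvexOn ℝ univ p) (hGp : (convexMinorants (G - p)).Nonempty) :
    ConvexOn ℝ univ (G - convexEnvelope (G - p)) := by
  refine (convexOn_iff_le_affine convex_univ).2 fun x _ y _ r hr c m hx hy => ?_
  have hv := convexEnvelope_le hGp
  simp only [Pi.sub_apply, Pi.le_def] at hx hy hv ⊢
  have hp_le : ∀ z ∈ Icc x y, p z ≤ c + m * z := fun z hz =>
    (convexOn_iff_le_affine convex_univ).1 hp x trivial y trivial z hz c m
      (by linarith [hv x]) (by linarith [hv y])
  have hk : ConvexOn ℝ (Icc x y) fun z => G z - (c + m * z) :=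
    (hG.subset (subset_univ _) (convex_Icc x y)).sub
      ((concaveOn_const c (convex_Icc x y)).add
        ((LinearMap.mulLeft ℝ m).concaveOn (convex_Icc x y)))
  have := le_convexEnvelope_of_frontier isClosed_Icc hGp hk
    (fun z hz => sub_le_sub_left (hp_le z (interior_subset hz)) (G z))
    (fun z hz => by
      rw [frontier_Icc (hr.1.trans hr.2)] at hz
      rcases hz with rfl | rfl <;> linarith) hr
  linarith

lemma exists_threshold_of_monotone {β : Type*} [LinearOrder β] {d : ℝ → β} (hd : Monotone d)
    {x y : ℝ} (hxy : x ≤ y) (e : β) : ∃ s ∈ Icc x y,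
      (s = x ∨ ∀ z < s, d z ≤ e) ∧ (s = y ∨ ∀ z > s, e ≤ d z) := by
  rcases le_or_gt e (d x) with hx | hx
  · exact ⟨x, left_mem_Icc.2 hxy, .inl rfl, .inr fun z hz => hx.trans (hd hz.le)⟩
  rcases le_or_gt (d y) e with hy | hy
  · exact ⟨y, right_mem_Icc.2 hxy, .inr fun z hz => (hd hz.le).trans hy, .inl rfl⟩
  have hub : y ∈ upperBounds {z | d z ≤ e} := fun z hz =>
    not_lt.1 fun hyz => (hy.trans_le (hd hyz.le)).not_ge hz
  refine ⟨sSup {z | d z ≤ e}, ⟨le_csSup ⟨y, hub⟩ hx.le, csSup_le ⟨x, hx.le⟩ hub⟩,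
    .inr fun z hz => ?_, .inr fun z hz => ?_⟩
  · obtain ⟨t, ht, hzt⟩ := exists_lt_of_lt_csSup ⟨x, hx.le⟩ hz
    exact (hd hzt.le).trans ht
  · exact (not_le.1 fun hze => hz.not_ge (le_csSup ⟨y, hub⟩ hze)).le

lemma convexEnvelope_sub_le_of_le_Iio {f h : ℝ → ℝ} (hf : (convexMinorants f).Nonempty)
    (hh : (convexMinorants h).Nonempty) {s e : ℝ} (hlt : ∀ z < s, (h - f) z ≤ e)
    (hs : (convexEnvelope h - convexEnvelope f) s ≤ e) {x : ℝ} (hx : x ≤ s) :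
    (convexEnvelope h - convexEnvelope f) x ≤ e := by
  simp only [Pi.sub_apply] at hlt hs ⊢
  have hk : ConvexOn ℝ (Iic s) fun z => convexEnvelope h z - e :=
    ((convexOn_convexEnvelope hh).subset (subset_univ _) (convex_Iic s)).sub
      (concaveOn_const e (convex_Iic s))
  have := le_convexEnvelope_of_frontier isClosed_Iic hf hk
    (fun z hz => by
      rw [interior_Iic] at hz
      linarith [hlt z hz, convexEnvelope_le hh z])
    (fun z hz => by
      rw [frontier_Iic, mem_singleton_iff] at hz
      subst hz
      linarith) hx
  linarith

lemma le_convexEnvelope_sub_of_le_Ioi {f h : ℝ → ℝ} (hf : (convexMinorants f).Nonempty)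
    (hh : (convexMinorants h).Nonempty) {s e : ℝ} (hgt : ∀ z > s, e ≤ (h - f) z)
    (hs : e ≤ (convexEnvelope h - convexEnvelope f) s) {y : ℝ} (hy : s ≤ y) :
    e ≤ (convexEnvelope h - convexEnvelope f) y := by
  simp only [Pi.sub_apply] at hgt hs ⊢
  have hk : ConvexOn ℝ (Ici s) fun z => convexEnvelope f z + e :=
    ((convexOn_convexEnvelope hf).subset (subset_univ _) (convex_Ici s)).add
      (convexOn_const e (convex_Ici s))
  have := le_convexEnvelope_of_frontier isClosed_Ici hh hk
    (fun z hz => by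
      rw [interior_Ici] at hz
      linarith [hgt z hz, convexEnvelope_le hf z])
    (fun z hz => by
      rw [frontier_Ici, mem_singleton_iff] at hz
      subst hz
      linarith) hy
  linarith

lemma monotone_convexEnvelope_sub {f h : ℝ → ℝ} (hf : (convexMinorants f).Nonempty)
    (hh : (convexMinorants h).Nonempty) (hd : Monotone (h - f)) :
    Monotone (convexEnvelope h - convexEnvelope f) := by
  intro x y hxy
  by_contra! hlt
  obtain ⟨e, hye, hex⟩ := exists_between hlt
  -- Where `h - f ≤ e`, lowering `convexEnvelope h` by `e` gives a competitor for
  -- `convexEnvelope f`; where `e ≤ h - f`, raising `convexEnvelope f` by `e` gives one for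
  -- `convexEnvelope h`.
  obtain ⟨s, hs, hleft, hright⟩ := exists_threshold_of_monotone hd hxy e
  rcases le_total ((convexEnvelope h - convexEnvelope f) s) e with hse | hse
  · refine hex.not_ge ?_
    rcases hleft with rfl | hleft
    exacts [hse, convexEnvelope_sub_le_of_le_Iio hf hh hleft hse hs.1]
  · refine hye.not_ge ?_
    rcases hright with rfl | hright
    exacts [hse, le_convexEnvelope_sub_of_le_Ioi hf hh hright hse hs.2]

end ConvexEnvelope

section RightDerivativeMeasure

variable {φ ψ : ℝ → ℝ}

lemma measure_Iic_rightDerivStieltjes (hφ : ConvexOn ℝ univ φ) {l : ℝ}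
    (hl : Tendsto φ atBot (𝓝 l)) (k : ℝ) :
    (rightDerivStieltjes hφ).measure (Iic k) = ENNReal.ofReal (rightDeriv φ k) := by
  rw [StieltjesFunction.measure_Iic _ (tendsto_rightDeriv_atBot hφ hl), sub_zero]
  rfl

lemma eq_of_rightDeriv_eq (hφ : ConvexOn ℝ univ φ) (hψ : ConvexOn ℝ univ ψ) {l : ℝ}
    (hφl : Tendsto φ atBot (𝓝 l)) (hψl : Tendsto ψ atBot (𝓝 l))
    (h : rightDeriv φ = rightDeriv ψ) : φ = ψ := by
  funext x
  have hincr : (fun y => φ x - φ y) = fun y => ψ x - ψ y := funext fun y => by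
    rw [← integral_rightDeriv hφ, ← integral_rightDeriv hψ, h]
  have hlim := hincr ▸ hφl.const_sub (φ x)
  exact sub_left_injective (tendsto_nhds_unique hlim (hψl.const_sub (ψ x)))

lemma rightDerivStieltjes_add (hφ : ConvexOn ℝ univ φ) (hψ : ConvexOn ℝ univ ψ) :
    rightDerivStieltjes (hφ.add hψ) = rightDerivStieltjes hφ + rightDerivStieltjes hψ := by
  ext x
  exact ((hasDerivWithinAt_rightDeriv hφ x).add (hasDerivWithinAt_rightDeriv hψ x)).derivWithin
    (uniqueDiffWithinAt_Ioi x)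

end RightDerivativeMeasure

section Potentials

/-- The put potential `k ↦ ∫ (k - x)⁺ dμ` of a measure on the line, whose right derivative is the
distribution function of `μ`. -/
noncomputable def putPotential (μ : Measure ℝ) (k : ℝ) : ℝ :=
  ∫ x, max (k - x) 0 ∂μ

/-- The call potential `k ↦ ∫ (x - k)⁺ dμ` of a measure on the line, the mirror image of the put
potential. -/
noncomputable def callPotential (μ : Measure ℝ) (k : ℝ) : ℝ :=
  ∫ x, max (x - k) 0 ∂μ

lemma putPotential_nonneg (μ : Measure ℝ) (k : ℝ) : 0 ≤ putPotential μ k :=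
  integral_nonneg fun _ => le_max_right _ _

variable {μ κ ν : Measure ℝ} [IsFiniteMeasure μ] [IsFiniteMeasure κ] [IsFiniteMeasure ν]

lemma integrable_put (hμ : Integrable (fun x : ℝ => x) μ) (k : ℝ) :
    Integrable (fun x => max (k - x) 0) μ :=
  ((integrable_const k).sub hμ).pos_part

lemma integrable_call (hμ : Integrable (fun x : ℝ => x) μ) (k : ℝ) :
    Integrable (fun x => max (x - k) 0) μ :=
  (hμ.sub (integrable_const k)).pos_part

lemma putPotential_add (hμ : Integrable (fun x : ℝ => x) μ) (hκ : Integrable (fun x : ℝ => x) κ) :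
    putPotential (μ + κ) = putPotential μ + putPotential κ :=
  funext fun k => integral_add_measure (integrable_put hμ k) (integrable_put hκ k)

lemma convexOn_putPotential (hμ : Integrable (fun x : ℝ => x) μ) :
    ConvexOn ℝ univ (putPotential μ) := by
  refine ⟨convex_univ, fun x _ y _ a b ha hb hab => ?_⟩
  have hput (t : ℝ) : ConvexOn ℝ univ fun k : ℝ => max (k - t) 0 :=
    ((convexOn_id convex_univ).sub (concaveOn_const t convex_univ)).sup
      (convexOn_const 0 convex_univ)
  simp only [putPotential, smul_eq_mul]
  rw [← integral_const_mul, ← integral_const_mul,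
    ← integral_add ((integrable_put hμ _).const_mul _) ((integrable_put hμ _).const_mul _)]
  exact integral_mono (integrable_put hμ _)
    (((integrable_put hμ _).const_mul _).add ((integrable_put hμ _).const_mul _))
    fun t => (hput t).2 trivial trivial ha hb hab

lemma monotone_measureReal_Iic (μ : Measure ℝ) [IsFiniteMeasure μ] :
    Monotone fun t => μ.real (Iic t) :=
  fun _ _ hst => measureReal_mono (Iic_subset_Iic.2 hst)

lemma tendsto_measureReal_Iic_nhdsGT (μ : Measure ℝ) [IsFiniteMeasure μ] (k : ℝ) :
    Tendsto (fun t => μ.real (Iic t)) (𝓝[>] k) (𝓝 (μ.real (Iic k))) := by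
  have h := tendsto_measure_biInter_gt (μ := μ) (s := Iic) (a := k)
    (fun _ _ => measurableSet_Iic.nullMeasurableSet) (fun _ _ _ hij => Iic_subset_Iic.2 hij)
    ⟨k + 1, lt_add_one k, measure_ne_top _ _⟩
  have hInter : ⋂ r > k, Iic r = Iic k := by
    ext x
    simpa using ⟨le_of_forall_gt_imp_ge_of_dense, fun h r hr => h.trans hr.le⟩
  rw [hInter] at h
  exact (ENNReal.tendsto_toReal (measure_ne_top _ _)).comp h

lemma measureReal_Iic_mul_le_putPotential_sub (hμ : Integrable (fun x : ℝ => x) μ) {x y : ℝ}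
    (hxy : x ≤ y) : μ.real (Iic x) * (y - x) ≤ putPotential μ y - putPotential μ x := by
  rw [putPotential, putPotential, ← integral_sub (integrable_put hμ y) (integrable_put hμ x),
    ← smul_eq_mul, ← integral_indicator_const _ measurableSet_Iic]
  refine integral_mono ((integrable_const _).indicator measurableSet_Iic)
    ((integrable_put hμ y).sub (integrable_put hμ x)) fun t => ?_
  by_cases ht : t ≤ x
  · simp [ht, ht.trans hxy]
  · simp [ht, (not_le.1 ht).le]

lemma putPotential_sub_le_measureReal_Iic_mul (hμ : Integrable (fun x : ℝ => x) μ) {x y : ℝ}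
    (hxy : x ≤ y) : putPotential μ y - putPotential μ x ≤ μ.real (Iic y) * (y - x) := by
  rw [putPotential, putPotential, ← integral_sub (integrable_put hμ y) (integrable_put hμ x),
    ← smul_eq_mul, ← integral_indicator_const _ measurableSet_Iic]
  refine integral_mono ((integrable_put hμ y).sub (integrable_put hμ x))
    ((integrable_const _).indicator measurableSet_Iic) fun t => ?_
  by_cases ht : t ≤ y
  · simp only [indicator_of_mem (mem_Iic.2 ht), max_eq_left (sub_nonneg.2 ht)]
    linarith [le_max_left (x - t) 0]
  · simp [ht, (not_le.1 ht).le, hxy.trans (not_le.1 ht).le]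

lemma hasDerivWithinAt_putPotential (hμ : Integrable (fun x : ℝ => x) μ) (k : ℝ) :
    HasDerivWithinAt (putPotential μ) (μ.real (Iic k)) (Ioi k) k := by
  rw [hasDerivWithinAt_iff_tendsto_slope' self_notMem_Ioi]
  refine tendsto_of_tendsto_of_tendsto_of_le_of_le' tendsto_const_nhds
    (tendsto_measureReal_Iic_nhdsGT μ k) ?_ ?_ <;>
  filter_upwards [self_mem_nhdsWithin] with y (hy : k < y)
  · rw [slope_def_field, le_div_iff₀ (sub_pos.2 hy)]
    exact measureReal_Iic_mul_le_putPotential_sub hμ hy.le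
  · rw [slope_def_field, div_le_iff₀ (sub_pos.2 hy)]
    exact putPotential_sub_le_measureReal_Iic_mul hμ hy.le

lemma rightDeriv_putPotential (hμ : Integrable (fun x : ℝ => x) μ) :
    rightDeriv (putPotential μ) = fun k => μ.real (Iic k) :=
  funext fun k => (hasDerivWithinAt_putPotential hμ k).derivWithin (uniqueDiffWithinAt_Ioi k)

lemma tendsto_putPotential_atBot (hμ : Integrable (fun x : ℝ => x) μ) :
    Tendsto (putPotential μ) atBot (𝓝 0) := by
  rw [← integral_zero ℝ ℝ (μ := μ)]
  refine tendsto_integral_filter_of_dominated_convergence (fun x => max (0 - x) 0)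
    (.of_forall fun k => (integrable_put hμ k).aestronglyMeasurable) ?_ (integrable_put hμ 0) ?_
  · filter_upwards [eventually_le_atBot 0] with k hk
    refine .of_forall fun x => ?_
    rw [Real.norm_of_nonneg (le_max_right _ _)]
    gcongr
  · refine .of_forall fun x => tendsto_const_nhds.congr' ?_
    filter_upwards [eventually_le_atBot x] with k hk
    simp [hk]

lemma callPotential_eq_putPotential_map_neg (μ : Measure ℝ) (k : ℝ) :
    callPotential μ k = putPotential (μ.map (MeasurableEquiv.neg ℝ)) (-k) := by
  rw [callPotential, putPotential, integral_map_equiv]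
  simp [add_comm, sub_eq_add_neg]

lemma tendsto_callPotential_atTop (hμ : Integrable (fun x : ℝ => x) μ) :
    Tendsto (callPotential μ) atTop (𝓝 0) := by
  rw [funext (callPotential_eq_putPotential_map_neg μ)]
  refine (tendsto_putPotential_atBot ?_).comp tendsto_neg_atTop_atBot
  exact (integrable_map_equiv _ _).2 hμ.neg

lemma putPotential_sub_callPotential (hμ : Integrable (fun x : ℝ => x) μ) (k : ℝ) :
    putPotential μ k - callPotential μ k = μ.real univ * k - ∫ x, x ∂μ := by
  rw [putPotential, callPotential, ← integral_sub (integrable_put hμ k) (integrable_call hμ k)]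
  have hpointwise (x : ℝ) : max (k - x) 0 - max (x - k) 0 = k - x := by
    simpa using max_zero_sub_max_neg_zero_eq_self (k - x)
  simp only [hpointwise]
  rw [integral_sub (integrable_const k) hμ, integral_const, smul_eq_mul]

lemma tendsto_putPotential_sub_affine_atTop (hμ : Integrable (fun x : ℝ => x) μ) :
    Tendsto (fun k => putPotential μ k - (μ.real univ * k - ∫ x, x ∂μ)) atTop (𝓝 0) :=
  (tendsto_callPotential_atTop hμ).congr fun k => by
    rw [← putPotential_sub_callPotential hμ, sub_sub_cancel]

lemma affine_unique_of_tendsto_sub_atTop {u : ℝ → ℝ} {a b a' b' : ℝ}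
    (h : Tendsto (fun k => u k - (a * k - b)) atTop (𝓝 0))
    (h' : Tendsto (fun k => u k - (a' * k - b')) atTop (𝓝 0)) : a = a' ∧ b = b' := by
  have hdiff : Tendsto (fun k => (a - a') * k) atTop (𝓝 (b - b')) := by
    have := (h'.sub h).add_const (b - b')
    simp only [sub_zero, zero_add] at this
    exact this.congr fun k => by ring
  have ha : a = a' := by
    by_contra hne
    rcases lt_or_gt_of_ne (sub_ne_zero.2 hne) with hneg | hpos
    · exact not_tendsto_nhds_of_tendsto_atBot (tendsto_id.const_mul_atTop_of_neg hneg) _ hdiff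
    · exact not_tendsto_nhds_of_tendsto_atTop (tendsto_id.const_mul_atTop hpos) _ hdiff
  subst ha
  simp only [sub_self, zero_mul] at hdiff
  exact ⟨rfl, (sub_eq_zero.1 (tendsto_nhds_unique hdiff tendsto_const_nhds)).symm ▸ rfl⟩

lemma measure_rightDerivStieltjes_putPotential (hν : Integrable (fun x : ℝ => x) ν) :
    (rightDerivStieltjes (convexOn_putPotential hν)).measure = ν := by
  refine (Measure.ext_of_Iic _ _ fun k => ?_).symm
  rw [measure_Iic_rightDerivStieltjes _ (tendsto_putPotential_atBot hν),
    rightDeriv_putPotential hν, ofReal_measureReal]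

lemma exists_le_putPotential_eq (hν : Integrable (fun x : ℝ => x) ν) {w v : ℝ → ℝ}
    (hw : ConvexOn ℝ univ w) (hv : ConvexOn ℝ univ v) (hwv : w + v = putPotential ν)
    (hw0 : Tendsto w atBot (𝓝 0)) : ∃ θ ≤ ν, putPotential θ = w := by
  have hsum : (rightDerivStieltjes hw).measure + (rightDerivStieltjes hv).measure = ν := by
    rw [← StieltjesFunction.measure_add, ← rightDerivStieltjes_add]
    simpa only [hwv] using measure_rightDerivStieltjes_putPotential hν
  have hle : (rightDerivStieltjes hw).measure ≤ ν := hsum ▸ Measure.le_add_right le_rfl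
  have := isFiniteMeasure_of_le ν hle
  have hmoment := hν.mono_measure hle
  refine ⟨_, hle, eq_of_rightDeriv_eq (convexOn_putPotential hmoment) hw
    (tendsto_putPotential_atBot hmoment) hw0 ?_⟩
  rw [rightDeriv_putPotential hmoment]
  funext k
  rw [Measure.real, measure_Iic_rightDerivStieltjes hw hw0,
    ENNReal.toReal_ofReal (rightDeriv_nonneg_of_tendsto_atBot hw hw0 k)]

end Potentials

section ConvexOrder

lemma bregman_eq_setIntegral {φ : ℝ → ℝ} (hφ : ConvexOn ℝ univ φ) (a x : ℝ) :
    φ x - φ a - rightDeriv φ a * (x - a) = ∫ t in Ι a x, |rightDeriv φ t - rightDeriv φ a| := by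
  have hmono := monotone_rightDeriv hφ
  have hInt : ∫ t in a..x, (rightDeriv φ t - rightDeriv φ a) =
      φ x - φ a - rightDeriv φ a * (x - a) := by
    rw [intervalIntegral.integral_sub hmono.intervalIntegrable (by simp),
      integral_rightDeriv hφ, intervalIntegral.integral_const, smul_eq_mul, mul_comm]
  rw [← hInt]
  rcases le_total a x with hax | hxa
  · rw [intervalIntegral.integral_of_le hax, uIoc_of_le hax]
    exact setIntegral_congr_fun measurableSet_Ioc fun t ht =>
      (abs_of_nonneg (sub_nonneg.2 (hmono ht.1.le))).symm
  · rw [intervalIntegral.integral_of_ge hxa, uIoc_of_ge hxa, ← integral_neg]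
    exact setIntegral_congr_fun measurableSet_Ioc fun t ht =>
      (abs_of_nonpos (sub_nonpos.2 (hmono ht.2))).symm

/-- The payoff at `x` of the option with strike `k` that is worthless at `a`: a call if `a < k`,
a put otherwise. -/
noncomputable def otmPayoff (a k x : ℝ) : ℝ≥0∞ :=
  if a < k then ENNReal.ofReal (x - k) else ENNReal.ofReal (k - x)

lemma measurable_otmPayoff (a : ℝ) : Measurable fun p : ℝ × ℝ => otmPayoff a p.2 p.1 :=
  Measurable.ite (measurableSet_lt measurable_const measurable_snd) (by fun_prop) (by fun_prop)

lemma setLIntegral_measure_uIoc (κ : Measure ℝ) [SFinite κ] (a x : ℝ) :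
    ∫⁻ t in Ι a x, κ (Ι a t) = ∫⁻ k, otmPayoff a k x ∂κ := by
  have hs : MeasurableSet {p : ℝ × ℝ | p.1 ∈ Ι a x ∧ p.2 ∈ Ι a p.1} :=
    (measurable_fst measurableSet_uIoc).inter
      ((measurableSet_lt (f := fun p : ℝ × ℝ => min a p.1) (by fun_prop) measurable_snd).inter
        (measurableSet_le (g := fun p : ℝ × ℝ => max a p.1) measurable_snd (by fun_prop)))
  have hfubini := (Measure.prod_apply (μ := (volume : Measure ℝ)) (ν := κ) hs).symm.trans
    (Measure.prod_apply_symm hs)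
  rw [← lintegral_indicator measurableSet_uIoc]
  refine Eq.trans (lintegral_congr fun t => ?_) (hfubini.trans (lintegral_congr fun k => ?_))
  · by_cases ht : t ∈ Ι a x <;> simp [ht, preimage]
  · by_cases hk : a < k
    · have : (fun t => (t, k)) ⁻¹' {p : ℝ × ℝ | p.1 ∈ Ι a x ∧ p.2 ∈ Ι a p.1} = Icc k x := by
        ext t
        simp only [mem_preimage, mem_ofPred_eq, mem_uIoc, mem_Icc]
        grind
      rw [this, Real.volume_Icc, otmPayoff, if_pos hk]
    · have : (fun t => (t, k)) ⁻¹' {p : ℝ × ℝ | p.1 ∈ Ι a x ∧ p.2 ∈ Ι a p.1} = Ioo x k := by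
        ext t
        simp only [mem_preimage, mem_ofPred_eq, mem_uIoc, mem_Ioo]
        grind
      rw [this, Real.volume_Ioo, otmPayoff, if_neg hk]

lemma ofReal_bregman_eq_lintegral_otmPayoff {φ : ℝ → ℝ} (hφ : ConvexOn ℝ univ φ) (a x : ℝ) :
    ENNReal.ofReal (φ x - φ a - rightDeriv φ a * (x - a)) =
      ∫⁻ k, otmPayoff a k x ∂(rightDerivStieltjes hφ).measure := by
  have hInt : IntegrableOn (fun t => |rightDeriv φ t - rightDeriv φ a|) (Ι a x) :=
    (intervalIntegrable_iff.1
      ((monotone_rightDeriv hφ).intervalIntegrable.sub intervalIntegrable_const)).abs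
  rw [bregman_eq_setIntegral hφ, ofReal_integral_eq_lintegral_ofReal hInt
    (.of_forall fun _ => abs_nonneg _), ← setLIntegral_measure_uIoc]
  refine lintegral_congr fun t => ?_
  have hmono := monotone_rightDeriv hφ
  rcases le_total a t with hat | hta
  · rw [uIoc_of_le hat, StieltjesFunction.measure_Ioc, abs_of_nonneg (sub_nonneg.2 (hmono hat))]
    rfl
  · rw [uIoc_of_ge hta, StieltjesFunction.measure_Ioc, abs_of_nonpos (sub_nonpos.2 (hmono hta)),
      neg_sub]
    rfl

variable {μ θ : Measure ℝ} [IsFiniteMeasure μ] [IsFiniteMeasure θ]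

lemma lintegral_ofReal_bregman {φ : ℝ → ℝ} (hφ : ConvexOn ℝ univ φ) (a : ℝ) :
    ∫⁻ x, ENNReal.ofReal (φ x - φ a - rightDeriv φ a * (x - a)) ∂μ =
      ∫⁻ k, ∫⁻ x, otmPayoff a k x ∂μ ∂(rightDerivStieltjes hφ).measure := by
  simp only [ofReal_bregman_eq_lintegral_otmPayoff hφ]
  exact lintegral_lintegral_swap (measurable_otmPayoff a).aemeasurable

lemma lintegral_otmPayoff (hμ : Integrable (fun x : ℝ => x) μ) (a k : ℝ) :
    ∫⁻ x, otmPayoff a k x ∂μ =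
      ENNReal.ofReal (if a < k then callPotential μ k else putPotential μ k) := by
  have hmax (c : ℝ) : ENNReal.ofReal c = ENNReal.ofReal (max c 0) := by simp
  unfold otmPayoff
  split_ifs
  · rw [callPotential, ofReal_integral_eq_lintegral_ofReal (integrable_call hμ k)
      (.of_forall fun _ => le_max_right _ _)]
    exact lintegral_congr fun x => hmax _
  · rw [putPotential, ofReal_integral_eq_lintegral_ofReal (integrable_put hμ k)
      (.of_forall fun _ => le_max_right _ _)]
    exact lintegral_congr fun x => hmax _

lemma integrable_bregman {φ : ℝ → ℝ} (hμ : Integrable (fun x : ℝ => x) μ)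
    (hφμ : Integrable φ μ) (c m a : ℝ) : Integrable (fun x => φ x - c - m * (x - a)) μ :=
  (hφμ.sub (integrable_const c)).sub ((hμ.sub (integrable_const a)).const_mul m)

lemma integral_bregman {φ : ℝ → ℝ} (hμ : Integrable (fun x : ℝ => x) μ) (hφμ : Integrable φ μ)
    (c m a : ℝ) : ∫ x, (φ x - c - m * (x - a)) ∂μ =
      ∫ x, φ x ∂μ - μ.real univ * c - m * (∫ x, x ∂μ - μ.real univ * a) := by
  have hconst : Integrable (fun x => φ x - c) μ := hφμ.sub (integrable_const c)
  have hlin : Integrable (fun x => m * (x - a)) μ := (hμ.sub (integrable_const a)).const_mul m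
  rw [integral_sub hconst hlin, integral_sub hφμ (integrable_const c), integral_const_mul,
    integral_sub hμ (integrable_const a)]
  simp

lemma convexOrder_of_putPotential_le (hμ : Integrable (fun x : ℝ => x) μ)
    (hθ : Integrable (fun x : ℝ => x) θ) (hmass : μ.real univ = θ.real univ)
    (hmean : ∫ x, x ∂μ = ∫ x, x ∂θ) (hput : putPotential μ ≤ putPotential θ) :
    ConvexOrder μ θ := by
  intro φ hφ hφμ hφθ
  have hcall (k : ℝ) : callPotential μ k ≤ callPotential θ k := by
    have hparity := putPotential_sub_callPotential hμ k
    rw [hmass, hmean, ← putPotential_sub_callPotential hθ k] at hparity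
    linarith [hput k]
  have hnonneg (x : ℝ) : 0 ≤ φ x - φ 0 - rightDeriv φ 0 * (x - 0) := by
    rw [bregman_eq_setIntegral hφ]
    exact integral_nonneg fun _ => abs_nonneg _
  have hlintegral : ∫⁻ x, ENNReal.ofReal (φ x - φ 0 - rightDeriv φ 0 * (x - 0)) ∂μ ≤
      ∫⁻ x, ENNReal.ofReal (φ x - φ 0 - rightDeriv φ 0 * (x - 0)) ∂θ := by
    simp only [lintegral_ofReal_bregman hφ, lintegral_otmPayoff hμ, lintegral_otmPayoff hθ]
    refine lintegral_mono fun k => ENNReal.ofReal_le_ofReal ?_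
    split_ifs
    exacts [hcall k, hput k]
  have hbregman : ∫ x, (φ x - φ 0 - rightDeriv φ 0 * (x - 0)) ∂μ ≤
      ∫ x, (φ x - φ 0 - rightDeriv φ 0 * (x - 0)) ∂θ := by
    rwa [← ofReal_integral_eq_lintegral_ofReal (integrable_bregman hμ hφμ _ _ _)
        (.of_forall hnonneg),
      ← ofReal_integral_eq_lintegral_ofReal (integrable_bregman hθ hφθ _ _ _)
        (.of_forall hnonneg),
      ENNReal.ofReal_le_ofReal_iff (integral_nonneg hnonneg)] at hlintegral
  rw [integral_bregman hμ hφμ, integral_bregman hθ hφθ, hmass, hmean] at hbregman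
  linarith

lemma convexOrder_iff_putPotential_le (hμ : Integrable (fun x : ℝ => x) μ)
    (hθ : Integrable (fun x : ℝ => x) θ) :
    ConvexOrder μ θ ↔ μ.real univ = θ.real univ ∧ ∫ x, x ∂μ = ∫ x, x ∂θ ∧
      putPotential μ ≤ putPotential θ := by
  refine ⟨fun h => ⟨le_antisymm ?_ ?_, le_antisymm ?_ ?_, fun k => ?_⟩,
    fun ⟨hmass, hmean, hput⟩ => convexOrder_of_putPotential_le hμ hθ hmass hmean hput⟩
  · simpa using h 1 (convexOn_const 1 convex_univ) (integrable_const 1) (integrable_const 1)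
  · simpa [integral_neg] using
      h (fun _ => -1) (convexOn_const (-1) convex_univ) (integrable_const _) (integrable_const _)
  · exact h _ (convexOn_id convex_univ) hμ hθ
  · have hneg := h (fun x => -x) (concaveOn_id convex_univ).neg hμ.neg hθ.neg
    rwa [integral_neg, integral_neg, neg_le_neg_iff] at hneg
  · exact h _ (((convexOn_const k convex_univ).sub (concaveOn_id convex_univ)).sup
      (convexOn_const 0 convex_univ)) (integrable_put hμ k) (integrable_put hθ k)

lemma convexOrder_of_putPotential_between {ρ : Measure ℝ} [IsFiniteMeasure ρ]
    (hμ : Integrable (fun x : ℝ => x) μ) (hθ : Integrable (fun x : ℝ => x) θ)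
    (hρ : Integrable (fun x : ℝ => x) ρ) (hμρ : ConvexOrder μ ρ)
    (hμθ : putPotential μ ≤ putPotential θ) (hθρ : putPotential θ ≤ putPotential ρ) :
    ConvexOrder μ θ := by
  obtain ⟨hmass, hmean, -⟩ := (convexOrder_iff_putPotential_le hμ hρ).1 hμρ
  have hasymp : Tendsto (fun k => putPotential θ k - (μ.real univ * k - ∫ x, x ∂μ)) atTop (𝓝 0) :=
    tendsto_of_tendsto_of_tendsto_of_le_of_le (tendsto_putPotential_sub_affine_atTop hμ)
      (hmass ▸ hmean ▸ tendsto_putPotential_sub_affine_atTop hρ)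
      (fun k => sub_le_sub_right (hμθ k) _) (fun k => sub_le_sub_right (hθρ k) _)
  obtain ⟨hmassθ, hmeanθ⟩ :=
    affine_unique_of_tendsto_sub_atTop hasymp (tendsto_putPotential_sub_affine_atTop hθ)
  exact convexOrder_of_putPotential_le hμ hθ hmassθ hmeanθ hμθ

end ConvexOrder

section Shadow

lemma IsShadow.isFiniteMeasure {η ν S : Measure ℝ} [IsFiniteMeasure ν] (h : IsShadow η ν S) :
    IsFiniteMeasure S :=
  isFiniteMeasure_of_le ν h.2.1

lemma IsShadow.integrable_id {η ν S : Measure ℝ} (h : IsShadow η ν S)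
    (hν : Integrable (fun x : ℝ => x) ν) : Integrable (fun x : ℝ => x) S :=
  hν.mono_measure h.2.1

variable {η κ ν S : Measure ℝ} [IsFiniteMeasure η] [IsFiniteMeasure κ] [IsFiniteMeasure ν]

lemma putPotential_measure_sub (hν : Integrable (fun x : ℝ => x) ν) (hκν : κ ≤ ν) :
    putPotential (ν - κ) = putPotential ν - putPotential κ := by
  rw [eq_sub_iff_add_eq, ← putPotential_add (hν.mono_measure Measure.sub_le)
    (hν.mono_measure hκν), Measure.sub_add_cancel_of_le hκν]

lemma putPotential_sub_mem_convexMinorants (hη : Integrable (fun x : ℝ => x) η)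
    (hν : Integrable (fun x : ℝ => x) ν) (hηκ : ConvexOrder η κ) (hκν : κ ≤ ν) :
    putPotential ν - putPotential κ ∈ convexMinorants (putPotential ν - putPotential η) := by
  refine ⟨?_, sub_le_sub_left
    ((convexOrder_iff_putPotential_le hη (hν.mono_measure hκν)).1 hηκ).2.2 _⟩
  rw [← putPotential_measure_sub hν hκν]
  exact convexOn_putPotential (hν.mono_measure Measure.sub_le)

lemma tendsto_putPotential_sub_convexEnvelope_atBot (hη : Integrable (fun x : ℝ => x) η)
    (hν : Integrable (fun x : ℝ => x) ν) (hle : putPotential η ≤ putPotential ν) :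
    Tendsto (putPotential ν - convexEnvelope (putPotential ν - putPotential η)) atBot (𝓝 0) := by
  have hzero : 0 ∈ convexMinorants (putPotential ν - putPotential η) :=
    ⟨convexOn_const 0 convex_univ, sub_nonneg.2 hle⟩
  refine tendsto_of_tendsto_of_tendsto_of_le_of_le (tendsto_putPotential_atBot hη)
    (tendsto_putPotential_atBot hν) (le_sub_comm.1 (convexEnvelope_le ⟨0, hzero⟩))
    (sub_le_self _ (le_convexEnvelope hzero))

lemma exists_convexOrder_putPotential_eq (hη : Integrable (fun x : ℝ => x) η)
    (hν : Integrable (fun x : ℝ => x) ν) (hηκ : ConvexOrder η κ) (hκν : κ ≤ ν) :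
    ∃ θ ≤ ν, ConvexOrder η θ ∧
      putPotential θ = putPotential ν - convexEnvelope (putPotential ν - putPotential η) := by
  have hκ := hν.mono_measure hκν
  have hmem := putPotential_sub_mem_convexMinorants hη hν hηκ hκν
  have hle : putPotential η ≤ putPotential ν :=
    ((convexOrder_iff_putPotential_le hη hκ).1 hηκ).2.2.trans <| sub_nonneg.1 <|
      putPotential_measure_sub hν hκν ▸ putPotential_nonneg (ν - κ)
  obtain ⟨θ, hθν, hθ⟩ := exists_le_putPotential_eq hν
    (convexOn_sub_convexEnvelope_sub (convexOn_putPotential hν) (convexOn_putPotential hη)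
      ⟨_, hmem⟩)
    (convexOn_convexEnvelope ⟨_, hmem⟩) (sub_add_cancel _ _)
    (tendsto_putPotential_sub_convexEnvelope_atBot hη hν hle)
  have := isFiniteMeasure_of_le ν hθν
  refine ⟨θ, hθν, convexOrder_of_putPotential_between hη (hν.mono_measure hθν) hκ hηκ ?_ ?_, hθ⟩
  · exact hθ ▸ le_sub_comm.1 (convexEnvelope_le ⟨_, hmem⟩)
  · exact hθ ▸ sub_le_comm.1 (le_convexEnvelope hmem)

lemma IsShadow.putPotential_sub_eq_convexEnvelope (h : IsShadow η ν S)
    (hη : Integrable (fun x : ℝ => x) η) (hν : Integrable (fun x : ℝ => x) ν) :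
    putPotential ν - putPotential S = convexEnvelope (putPotential ν - putPotential η) := by
  have := h.isFiniteMeasure
  refine le_antisymm
    (le_convexEnvelope (putPotential_sub_mem_convexMinorants hη hν h.1 h.2.1)) ?_
  obtain ⟨θ, hθν, hηθ, hθ⟩ := exists_convexOrder_putPotential_eq hη hν h.1 h.2.1
  have := isFiniteMeasure_of_le ν hθν
  have hSθ := ((convexOrder_iff_putPotential_le (h.integrable_id hν) (hν.mono_measure hθν)).1
    (h.2.2 θ hηθ hθν)).2.2
  exact le_sub_comm.1 (hSθ.trans_eq hθ)

end Shadow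

section DistributionFunctionDistance

/-- The indicator of the interval between `0` and `x`, counted negatively if `x < 0`: integrating
a function against it gives the primitive of that function vanishing at `0`. -/
noncomputable def signedIndicator (x t : ℝ) : ℝ :=
  (Iio x).indicator 1 t - (Iio 0).indicator 1 t

lemma indicator_Ico_eq_sub {a b : ℝ} (hab : a ≤ b) :
    (Ico a b).indicator (1 : ℝ → ℝ) = (Iio b).indicator 1 - (Iio a).indicator 1 := by
  rw [← Ici_inter_Iio, inter_comm, ← compl_Iio, ← sdiff_eq, indicator_sdiff (Iio_subset_Iio hab)]

lemma signedIndicator_of_nonneg {x : ℝ} (hx : 0 ≤ x) :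
    signedIndicator x = (Ico 0 x).indicator 1 :=
  (indicator_Ico_eq_sub hx).symm

lemma signedIndicator_of_nonpos {x : ℝ} (hx : x ≤ 0) :
    signedIndicator x = -(Ico x 0).indicator 1 := by
  rw [indicator_Ico_eq_sub hx, neg_sub]
  rfl

lemma integral_mul_signedIndicator (ψ : ℝ → ℝ) (x : ℝ) :
    ∫ t, ψ t * signedIndicator x t = ∫ t in 0..x, ψ t := by
  have hIco (a b : ℝ) : ∫ t, ψ t * (Ico a b).indicator 1 t = ∫ t in Ioc a b, ψ t := by
    simp_rw [← integral_Ico_eq_integral_Ioc, ← integral_indicator measurableSet_Ico,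
      ← indicator_mul_right, Pi.one_apply, mul_one]
  rcases le_total 0 x with hx | hx
  · rw [signedIndicator_of_nonneg hx, hIco, intervalIntegral.integral_of_le hx]
  · simp_rw [signedIndicator_of_nonpos hx, Pi.neg_apply, mul_neg]
    rw [integral_neg, hIco, intervalIntegral.integral_of_ge hx]

lemma integrable_signedIndicator (x : ℝ) : Integrable (signedIndicator x) := by
  have hIco (a b : ℝ) : Integrable ((Ico a b).indicator (1 : ℝ → ℝ)) :=
    (integrable_indicator_iff measurableSet_Ico).2 (integrableOn_const (by simp))
  rcases le_total 0 x with hx | hx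
  · exact signedIndicator_of_nonneg hx ▸ hIco 0 x
  · exact signedIndicator_of_nonpos hx ▸ (hIco x 0).neg

lemma integral_norm_signedIndicator (x : ℝ) : ∫ t, ‖signedIndicator x t‖ = |x| := by
  rcases le_total 0 x with hx | hx
  · simp [signedIndicator_of_nonneg hx, norm_indicator_eq_indicator_norm, integral_indicator,
      abs_of_nonneg hx, hx]
  · simp [signedIndicator_of_nonpos hx, norm_indicator_eq_indicator_norm, integral_indicator,
      abs_of_nonpos hx, hx]

lemma measurable_signedIndicator : Measurable fun p : ℝ × ℝ => signedIndicator p.1 p.2 :=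
  (Measurable.indicator (s := {p : ℝ × ℝ | p.2 < p.1}) measurable_one
    (measurableSet_lt measurable_snd measurable_fst)).sub
    (Measurable.indicator (s := {p : ℝ × ℝ | p.2 < 0}) measurable_one
      (measurableSet_lt measurable_snd measurable_const))

lemma integrable_prod_signedIndicator {μ : Measure ℝ} [SFinite μ]
    (hμ : Integrable (fun x : ℝ => x) μ) :
    Integrable (fun p : ℝ × ℝ => signedIndicator p.1 p.2) (μ.prod volume) := by
  rw [integrable_prod_iff measurable_signedIndicator.aestronglyMeasurable]
  exact ⟨.of_forall integrable_signedIndicator,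
    by simpa only [integral_norm_signedIndicator] using hμ.abs⟩

variable {μ κ : Measure ℝ} [IsFiniteMeasure μ] [IsFiniteMeasure κ]

lemma integral_signedIndicator (μ : Measure ℝ) [IsFiniteMeasure μ] (t : ℝ) :
    ∫ x, signedIndicator x t ∂μ =
      μ.real univ - μ.real (Iic t) - μ.real univ * (Iio 0).indicator 1 t := by
  have hIoi : (fun x : ℝ => (Iio x).indicator (1 : ℝ → ℝ) t) = (Ioi t).indicator 1 := by
    ext x
    simp [indicator]
  have hInt : Integrable ((Ioi t).indicator (1 : ℝ → ℝ)) μ :=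
    (integrable_const (1 : ℝ)).indicator measurableSet_Ioi
  simp only [signedIndicator]
  rw [integral_sub (hIoi ▸ hInt) (integrable_const _), hIoi,
    integral_indicator_one measurableSet_Ioi, ← compl_Iic, measureReal_compl measurableSet_Iic,
    integral_const, smul_eq_mul]

lemma measureReal_Iic_sub_eq_integral_signedIndicator_sub (hmass : μ.real univ = κ.real univ)
    (t : ℝ) : μ.real (Iic t) - κ.real (Iic t) =
      ∫ x, signedIndicator x t ∂κ - ∫ x, signedIndicator x t ∂μ := by
  rw [integral_signedIndicator, integral_signedIndicator, hmass]
  ring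

lemma integrable_measureReal_Iic_sub (hμ : Integrable (fun x : ℝ => x) μ)
    (hκ : Integrable (fun x : ℝ => x) κ) (hmass : μ.real univ = κ.real univ) :
    Integrable fun t => μ.real (Iic t) - κ.real (Iic t) := by
  simp only [measureReal_Iic_sub_eq_integral_signedIndicator_sub hmass]
  exact (integrable_prod_signedIndicator hκ).integral_prod_right.sub
    (integrable_prod_signedIndicator hμ).integral_prod_right

lemma integral_intervalIntegral_eq (hμ : Integrable (fun x : ℝ => x) μ) {ψ : ℝ → ℝ} {C : ℝ}
    (hψ : Measurable ψ) (hC : ∀ t, ‖ψ t‖ ≤ C) :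
    ∫ x, (∫ t in 0..x, ψ t) ∂μ = ∫ t, ψ t * ∫ x, signedIndicator x t ∂μ := by
  have hInt : Integrable (fun p : ℝ × ℝ => ψ p.2 * signedIndicator p.1 p.2) (μ.prod volume) :=
    (integrable_prod_signedIndicator hμ).bdd_mul (hψ.comp measurable_snd).aestronglyMeasurable
      (.of_forall fun p => hC p.2)
  simpa only [integral_mul_signedIndicator, integral_const_mul] using
    integral_integral_swap (f := fun x t => ψ t * signedIndicator x t) hInt

lemma integral_intervalIntegral_sub (hμ : Integrable (fun x : ℝ => x) μ)
    (hκ : Integrable (fun x : ℝ => x) κ) (hmass : μ.real univ = κ.real univ) {ψ : ℝ → ℝ} {C : ℝ}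
    (hψ : Measurable ψ) (hC : ∀ t, ‖ψ t‖ ≤ C) :
    ∫ x, (∫ t in 0..x, ψ t) ∂κ - ∫ x, (∫ t in 0..x, ψ t) ∂μ =
      ∫ t, ψ t * (μ.real (Iic t) - κ.real (Iic t)) := by
  have hInt {ρ : Measure ℝ} [IsFiniteMeasure ρ] (hρ : Integrable (fun x : ℝ => x) ρ) :
      Integrable fun t => ψ t * ∫ x, signedIndicator x t ∂ρ :=
    (integrable_prod_signedIndicator hρ).integral_prod_right.bdd_mul hψ.aestronglyMeasurable
      (.of_forall hC)
  rw [integral_intervalIntegral_eq hμ hψ hC, integral_intervalIntegral_eq hκ hψ hC,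
    ← integral_sub (hInt hκ) (hInt hμ)]
  simp only [measureReal_Iic_sub_eq_integral_signedIndicator_sub hmass, mul_sub]

open scoped NNReal

lemma integrable_of_lipschitzWith (hμ : Integrable (fun x : ℝ => x) μ) {K : ℝ≥0} {f : ℝ → ℝ}
    (hf : LipschitzWith K f) : Integrable f μ := by
  refine Integrable.mono' ((integrable_const |f 0|).add (hμ.abs.const_mul K))
    hf.continuous.aestronglyMeasurable (.of_forall fun x => ?_)
  have hdist := hf.dist_le_mul x 0
  rw [Real.dist_eq, Real.dist_eq, sub_zero] at hdist
  exact sub_le_iff_le_add'.1 ((abs_sub_abs_le_abs_sub _ _).trans hdist)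

lemma integral_sub_eq_integral_deriv_mul (hμ : Integrable (fun x : ℝ => x) μ)
    (hκ : Integrable (fun x : ℝ => x) κ) (hmass : μ.real univ = κ.real univ) {K : ℝ≥0}
    {f : ℝ → ℝ} (hf : LipschitzWith K f) :
    ∫ x, f x ∂κ - ∫ x, f x ∂μ = ∫ t, deriv f t * (μ.real (Iic t) - κ.real (Iic t)) := by
  have hftc (x : ℝ) : ∫ t in 0..x, deriv f t = f x - f 0 :=
    hf.lipschitzOnWith.absolutelyContinuousOnInterval.integral_deriv_eq_sub
  rw [← integral_intervalIntegral_sub hμ hκ hmass (measurable_deriv f)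
    fun t => norm_deriv_le_of_lipschitz hf]
  simp only [hftc]
  rw [integral_sub (integrable_of_lipschitzWith hμ hf) (integrable_const _),
    integral_sub (integrable_of_lipschitzWith hκ hf) (integrable_const _), integral_const,
    integral_const, hmass, sub_sub_sub_cancel_right]

lemma abs_integral_sub_le_mul_integral_abs (hμ : Integrable (fun x : ℝ => x) μ)
    (hκ : Integrable (fun x : ℝ => x) κ) (hmass : μ.real univ = κ.real univ) {K : ℝ≥0}
    {f : ℝ → ℝ} (hf : LipschitzWith K f) :
    |∫ x, f x ∂μ - ∫ x, f x ∂κ| ≤ K * ∫ t, |μ.real (Iic t) - κ.real (Iic t)| := by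
  have hInt := integrable_measureReal_Iic_sub hμ hκ hmass
  rw [← Real.norm_eq_abs, norm_sub_rev, integral_sub_eq_integral_deriv_mul hμ hκ hmass hf,
    ← integral_const_mul]
  refine norm_integral_le_of_norm_le (hInt.abs.const_mul K) (.of_forall fun t => ?_)
  rw [norm_mul]
  exact mul_le_mul_of_nonneg_right (norm_deriv_le_of_lipschitz hf) (norm_nonneg _)

lemma lipschitzWith_intervalIntegral {ψ : ℝ → ℝ} {K : ℝ≥0} (hψ : Measurable ψ)
    (hK : ∀ t, ‖ψ t‖ ≤ K) (a : ℝ) : LipschitzWith K fun x => ∫ t in a..x, ψ t := by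
  have hInt (x y : ℝ) : IntervalIntegrable ψ volume x y :=
    (intervalIntegrable_const (c := (K : ℝ))).mono_fun hψ.aestronglyMeasurable
      (.of_forall fun t => by simpa using hK t)
  refine LipschitzWith.of_dist_le_mul fun x y => ?_
  rw [Real.dist_eq, Real.dist_eq, intervalIntegral.integral_interval_sub_left (hInt _ _) (hInt _ _)]
  exact intervalIntegral.norm_integral_le_of_norm_le_const (f := ψ) fun t _ => hK t

lemma exists_lipschitzWith_integral_sub_eq (hμ : Integrable (fun x : ℝ => x) μ)
    (hκ : Integrable (fun x : ℝ => x) κ) (hmass : μ.real univ = κ.real univ) :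
    ∃ f : ℝ → ℝ, LipschitzWith 1 f ∧
      ∫ x, f x ∂κ - ∫ x, f x ∂μ = ∫ t, |μ.real (Iic t) - κ.real (Iic t)| := by
  let ψ (t : ℝ) : ℝ := if μ.real (Iic t) < κ.real (Iic t) then -1 else 1
  have hψ : Measurable ψ :=
    Measurable.ite (measurableSet_lt (monotone_measureReal_Iic μ).measurable
      (monotone_measureReal_Iic κ).measurable) measurable_const measurable_const
  have hbound (t : ℝ) : ‖ψ t‖ ≤ (1 : ℝ≥0) := by
    simp only [ψ]
    split_ifs <;> simp
  refine ⟨_, lipschitzWith_intervalIntegral hψ hbound 0, ?_⟩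
  rw [integral_intervalIntegral_sub hμ hκ hmass hψ hbound]
  refine integral_congr_ae (.of_forall fun t => ?_)
  simp only [ψ]
  split_ifs with ht
  · rw [abs_of_neg (sub_neg.2 ht), neg_one_mul]
  · rw [abs_of_nonneg (sub_nonneg.2 (not_lt.1 ht)), one_mul]

theorem W1_eq_integral_abs_measureReal_Iic_sub (hμ : Integrable (fun x : ℝ => x) μ)
    (hκ : Integrable (fun x : ℝ => x) κ) (hmass : μ.real univ = κ.real univ) :
    W1 μ κ = ∫ t, |μ.real (Iic t) - κ.real (Iic t)| := by
  have hupper (f : {f : ℝ → ℝ // LipschitzWith 1 f}) :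
      |∫ x, f.1 x ∂μ - ∫ x, f.1 x ∂κ| ≤ ∫ t, |μ.real (Iic t) - κ.real (Iic t)| := by
    simpa using abs_integral_sub_le_mul_integral_abs hμ hκ hmass f.2
  obtain ⟨f, hf, hfeq⟩ := exists_lipschitzWith_integral_sub_eq hμ hκ hmass
  have : Nonempty {f : ℝ → ℝ // LipschitzWith 1 f} := ⟨f, hf⟩
  refine le_antisymm (ciSup_le hupper) ?_
  rw [← hfeq]
  refine ((le_abs_self _).trans_eq (abs_sub_comm _ _)).trans ?_
  exact le_ciSup (f := fun f : {f : ℝ → ℝ // LipschitzWith 1 f} =>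
    |∫ x, f.1 x ∂μ - ∫ x, f.1 x ∂κ|) ⟨_, forall_mem_range.2 hupper⟩ ⟨f, hf⟩

end DistributionFunctionDistance

section TotalVariation

lemma intervalIntegral_deriv_le_of_monotone {M : ℝ → ℝ} (hM : Monotone M) {a b : ℝ}
    (hab : a ≤ b) : ∫ x in a..b, deriv M x ≤ M b - M a := by
  have hmem := (hM.monotoneOn (uIcc a b)).intervalIntegral_deriv_mem_uIcc
  rw [uIcc_of_le (sub_nonneg.2 (hM hab))] at hmem
  exact hmem.2

lemma integral_abs_le_of_hasDerivWithinAt_sub {M N D : ℝ → ℝ} {A B : ℝ} (hM : Monotone M)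
    (hN : Monotone N) (hMA : ∀ x y, M y - M x ≤ A) (hNB : ∀ x y, N y - N x ≤ B)
    (hD : ∀ᵐ x, HasDerivWithinAt (M - N) (D x) (Ioi x) x) (hDint : Integrable D) :
    ∫ x, |D x| ≤ A + B := by
  have hbound : ∀ᵐ x, |D x| ≤ deriv M x + deriv N x := by
    filter_upwards [hM.ae_differentiableAt, hN.ae_differentiableAt, hD] with x hMx hNx hDx
    have hDeq : D x = deriv M x - deriv N x := (uniqueDiffWithinAt_Ioi x).eq_deriv _ hDx
      (hMx.hasDerivAt.sub hNx.hasDerivAt).hasDerivWithinAt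
    rw [hDeq, abs_le]
    constructor <;> linarith [hM.deriv_nonneg (x := x), hN.deriv_nonneg (x := x)]
  have hlim := intervalIntegral_tendsto_integral hDint.abs tendsto_neg_atTop_atBot tendsto_id
  refine le_of_tendsto hlim ?_
  filter_upwards [eventually_ge_atTop 0] with r hr
  have hle : -r ≤ id r := neg_le_self hr
  have hMint := (hM.monotoneOn (uIcc (-r) (id r))).intervalIntegrable_deriv
  have hNint := (hN.monotoneOn (uIcc (-r) (id r))).intervalIntegrable_deriv
  calc ∫ x in -r..id r, |D x|
      ≤ ∫ x in -r..id r, (deriv M x + deriv N x) :=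
        intervalIntegral.integral_mono_ae hle hDint.abs.intervalIntegrable (hMint.add hNint) hbound
    _ = (∫ x in -r..id r, deriv M x) + ∫ x in -r..id r, deriv N x :=
        intervalIntegral.integral_add hMint hNint
    _ ≤ A + B := add_le_add
        ((intervalIntegral_deriv_le_of_monotone hM hle).trans (hMA _ _))
        ((intervalIntegral_deriv_le_of_monotone hN hle).trans (hNB _ _))

lemma monotone_setIntegral_Iic {p : ℝ → ℝ} (hp : Integrable p) (hp0 : 0 ≤ p) :
    Monotone fun x => ∫ t in Iic x, p t := fun _ _ hxy =>
  setIntegral_mono_set hp.integrableOn (.of_forall hp0) (Iic_subset_Iic.2 hxy).eventuallyLE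

lemma convexEnvelope_add_setIntegral_Iic_sub {f p : ℝ → ℝ} (hf : (convexMinorants f).Nonempty)
    (hp : Integrable p) (hp0 : 0 ≤ p) :
    Monotone (convexEnvelope (f + fun x => ∫ t in Iic x, p t) - convexEnvelope f) ∧
      ∀ x y, (convexEnvelope (f + fun x => ∫ t in Iic x, p t) - convexEnvelope f) y -
        (convexEnvelope (f + fun x => ∫ t in Iic x, p t) - convexEnvelope f) x ≤ ∫ t, p t := by
  set h := f + fun x => ∫ t in Iic x, p t with hh
  have hfh : f ≤ h := fun x => le_add_of_nonneg_right (integral_nonneg hp0)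
  have hne : (convexMinorants h).Nonempty := hf.mono (convexMinorants_mono hfh)
  refine ⟨monotone_convexEnvelope_sub hf hne ?_, fun x y => ?_⟩
  · rw [hh, add_sub_cancel_left]
    exact monotone_setIntegral_Iic hp hp0
  · have hlower : convexEnvelope f x ≤ convexEnvelope h x := convexEnvelope_mono hf hfh x
    have hupper : convexEnvelope h y ≤ convexEnvelope f y + ∫ t, p t :=
      convexEnvelope_le_add_const hne
        (fun z => add_le_add_right (setIntegral_le_integral hp (.of_forall hp0)) (f z)) y
    simp only [Pi.sub_apply]
    linarith

theorem integral_abs_deriv_convexEnvelope_sub_le {f g D E : ℝ → ℝ}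
    (hf : (convexMinorants f).Nonempty) (hg : (convexMinorants g).Nonempty) (hD : Integrable D)
    (hfg : ∀ x, ∫ t in Iic x, D t = g x - f x)
    (hE : ∀ᵐ x, HasDerivWithinAt (convexEnvelope g - convexEnvelope f) (E x) (Ioi x) x)
    (hEint : Integrable E) : ∫ x, |E x| ≤ ∫ x, |D x| := by
  have hpos : Integrable fun t => (D t)⁺ := hD.pos_part
  have hneg : Integrable fun t => (D t)⁻ := hD.neg_part
  have hcommon : (f + fun x => ∫ t in Iic x, (D t)⁺) = g + fun x => ∫ t in Iic x, (D t)⁻ := by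
    funext x
    have hsub := integral_sub (hpos.integrableOn (s := Iic x)) hneg.integrableOn
    simp only [posPart_sub_negPart, hfg] at hsub
    simp only [Pi.add_apply]
    linarith
  obtain ⟨hM, hMle⟩ := convexEnvelope_add_setIntegral_Iic_sub hf hpos fun t => posPart_nonneg _
  obtain ⟨hN, hNle⟩ := convexEnvelope_add_setIntegral_Iic_sub hg hneg fun t => negPart_nonneg _
  rw [← hcommon] at hN hNle
  calc ∫ x, |E x| ≤ (∫ x, (D x)⁺) + ∫ x, (D x)⁻ :=
        integral_abs_le_of_hasDerivWithinAt_sub hM hN hMle hNle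
          (by simpa only [sub_sub_sub_cancel_left] using hE) hEint
    _ = ∫ x, |D x| := by
        rw [← integral_add hpos hneg]
        simp only [posPart_add_negPart]

end TotalVariation

section ShadowContraction

lemma intervalIntegral_measureReal_Iic {μ : Measure ℝ} [IsFiniteMeasure μ]
    (hμ : Integrable (fun x : ℝ => x) μ) (a b : ℝ) :
    ∫ t in a..b, μ.real (Iic t) = putPotential μ b - putPotential μ a := by
  simpa only [rightDeriv_putPotential hμ] using
    integral_rightDeriv (convexOn_putPotential hμ) a b

lemma integral_Iic_measureReal_Iic_sub {μ κ : Measure ℝ} [IsFiniteMeasure μ] [IsFiniteMeasure κ]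
    (hμ : Integrable (fun x : ℝ => x) μ) (hκ : Integrable (fun x : ℝ => x) κ)
    (hmass : μ.real univ = κ.real univ) (x : ℝ) :
    ∫ t in Iic x, (μ.real (Iic t) - κ.real (Iic t)) = putPotential μ x - putPotential κ x := by
  have hftc (y : ℝ) : ∫ t in y..x, (μ.real (Iic t) - κ.real (Iic t)) =
      putPotential μ x - putPotential μ y - (putPotential κ x - putPotential κ y) := by
    rw [intervalIntegral.integral_sub (monotone_measureReal_Iic μ).intervalIntegrable
      (monotone_measureReal_Iic κ).intervalIntegrable, intervalIntegral_measureReal_Iic hμ,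
      intervalIntegral_measureReal_Iic hκ]
  have hleft := intervalIntegral_tendsto_integral_Iic x
    (integrable_measureReal_Iic_sub hμ hκ hmass).integrableOn tendsto_id
  simp only [id, hftc] at hleft
  have hright := ((tendsto_putPotential_atBot hμ).const_sub (putPotential μ x)).sub
    ((tendsto_putPotential_atBot hκ).const_sub (putPotential κ x))
  simpa only [sub_zero] using tendsto_nhds_unique hleft hright

variable {η η' ν S S' : Measure ℝ} [IsFiniteMeasure η] [IsFiniteMeasure η'] [IsFiniteMeasure ν]

lemma IsShadow.measureReal_univ_eq (h : IsShadow η ν S) (hη : Integrable (fun x : ℝ => x) η)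
    (hν : Integrable (fun x : ℝ => x) ν) : η.real univ = S.real univ :=
  have := h.isFiniteMeasure
  ((convexOrder_iff_putPotential_le hη (h.integrable_id hν)).1 h.1).1

lemma IsShadow.integral_abs_measureReal_Iic_sub_le (h : IsShadow η ν S) (h' : IsShadow η' ν S')
    (hη : Integrable (fun x : ℝ => x) η) (hη' : Integrable (fun x : ℝ => x) η')
    (hν : Integrable (fun x : ℝ => x) ν) (hmass : η.real univ = η'.real univ) :
    ∫ t, |S.real (Iic t) - S'.real (Iic t)| ≤ ∫ t, |η.real (Iic t) - η'.real (Iic t)| := by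
  have := h.isFiniteMeasure
  have := h'.isFiniteMeasure
  have hS := h.integrable_id hν
  have hS' := h'.integrable_id hν
  have hmassS : S.real univ = S'.real univ := by
    rw [← h.measureReal_univ_eq hη hν, hmass, h'.measureReal_univ_eq hη' hν]
  refine integral_abs_deriv_convexEnvelope_sub_le
    ⟨_, putPotential_sub_mem_convexMinorants hη hν h.1 h.2.1⟩
    ⟨_, putPotential_sub_mem_convexMinorants hη' hν h'.1 h'.2.1⟩
    (integrable_measureReal_Iic_sub hη hη' hmass) (fun x => ?_) (.of_forall fun x => ?_)
    (integrable_measureReal_Iic_sub hS hS' hmassS)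
  · rw [integral_Iic_measureReal_Iic_sub hη hη' hmass, Pi.sub_apply, Pi.sub_apply,
      sub_sub_sub_cancel_left]
  · rw [← h.putPotential_sub_eq_convexEnvelope hη hν,
      ← h'.putPotential_sub_eq_convexEnvelope hη' hν, sub_sub_sub_cancel_left]
    exact (hasDerivWithinAt_putPotential hS x).sub (hasDerivWithinAt_putPotential hS' x)

theorem shadow_lipschitz_general (hη : Integrable (fun x : ℝ => x) η)
    (hη' : Integrable (fun x : ℝ => x) η') (hν : Integrable (fun x : ℝ => x) ν)
    (hmass : η univ = η' univ) (hS : IsShadow η ν S) (hS' : IsShadow η' ν S') :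
    W1 S S' ≤ W1 η η' := by
  have := hS.isFiniteMeasure
  have := hS'.isFiniteMeasure
  have hmassReal : η.real univ = η'.real univ := congrArg ENNReal.toReal hmass
  have hmassS : S.real univ = S'.real univ := by
    rw [← hS.measureReal_univ_eq hη hν, hmassReal, hS'.measureReal_univ_eq hη' hν]
  rw [W1_eq_integral_abs_measureReal_Iic_sub hη hη' hmassReal,
    W1_eq_integral_abs_measureReal_Iic_sub (hS.integrable_id hν) (hS'.integrable_id hν) hmassS]
  exact hS.integral_abs_measureReal_Iic_sub_le hS' hη hη' hν hmassReal

end ShadowContraction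

/-- The shadow projection is 1-Lipschitz for the Wasserstein-1 distance:
`W(S^ν(η), S^ν(η')) ≤ W(η, η')` for measures of equal mass with `η' ≤_c η`. -/
theorem shadow_lipschitz (η η' ν : Measure ℝ)
    [IsFiniteMeasure η] [IsFiniteMeasure η'] [IsFiniteMeasure ν]
    (hη : Integrable (fun x : ℝ => x) η) (hη' : Integrable (fun x : ℝ => x) η')
    (hν : Integrable (fun x : ℝ => x) ν)
    (hmass : η Set.univ = η' Set.univ)
    (hc : ConvexOrder η' η)
    (h₁ : ConvexPlusOrder η ν) (h₂ : ConvexPlusOrder η' ν)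
    (Sη Sη' : Measure ℝ) (hSη : IsShadow η ν Sη) (hSη' : IsShadow η' ν Sη') :
    W1 Sη Sη' ≤ W1 η η' :=
  shadow_lipschitz_general hη hη' hν hmass hSη hSη'
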